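/- There exist two 4×4 pairwise comparison matrices A⁽¹⁾ and A⁽²⁾, positive vectors w⁽¹⁾, w⁽²⁾, u and real numbers λ⁽¹⁾, λ⁽²⁾, μ with A⁽¹⁾·w⁽¹⁾ = λ⁽¹⁾·w⁽¹⁾, A⁽²⁾·w⁽²⁾ = λ⁽²⁾·w⁽²⁾ and (A⁽¹⁾ ⊕ A⁽²⁾)·u = μ·u, such that w⁽¹⁾_2 > w⁽¹⁾_1, w⁽²⁾_2 > w⁽²⁾_1, yet u_2 = u_1. Hence the Eigenvector Method violates aggregation invariance. -/

import Mathlib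

/-- A pairwise comparison matrix: all entries positive and `A j i = 1 / A i j`. -/
def IsPCM {n : ℕ} (A : Matrix (Fin n) (Fin n) ℝ) : Prop :=
  (∀ i j, 0 < A i j) ∧ ∀ i j, A j i = 1 / A i j

/-- The aggregate (entrywise geometric mean) of two pairwise comparison matrices. -/
noncomputable def agg2 {n : ℕ} (A B : Matrix (Fin n) (Fin n) ℝ) :
    Matrix (Fin n) (Fin n) ℝ :=
  Matrix.of fun i j => Real.sqrt (A i j * B i j)

noncomputable def scl (E : Matrix (Fin 4) (Fin 4) ℝ) (v : Fin 4 → ℝ) :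
    Matrix (Fin 4) (Fin 4) ℝ := fun i j => E i j * v j / v i

theorem scl_isPCM (E : Matrix (Fin 4) (Fin 4) ℝ) (v : Fin 4 → ℝ) (hv : ∀ i, 0 < v i)
    (hE : IsPCM E) : IsPCM (scl E v) := by
  refine ⟨fun i j => ?_, fun i j => ?_⟩
  · exact div_pos (mul_pos (hE.1 i j) (hv j)) (hv i)
  · have h1 := (hv i).ne'
    have h2 := (hv j).ne'
    have h3 := (hE.1 i j).ne'
    simp only [scl, hE.2 i j]
    field_simp

theorem scl_mulVec (E : Matrix (Fin 4) (Fin 4) ℝ) (v x : Fin 4 → ℝ) (c : ℝ)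
    (hv : ∀ i, 0 < v i) (h : ∀ i, ∑ j, E i j * x j = c * x i) :
    (scl E v).mulVec (fun i => x i / v i) = c • (fun i => x i / v i) := by
  funext i
  simp only [Matrix.mulVec, dotProduct, scl, Pi.smul_apply, smul_eq_mul]
  rw [← mul_div_assoc, ← h i, Finset.sum_div]
  refine Finset.sum_congr rfl fun j _ => ?_
  have h1 := (hv i).ne'
  have h2 := (hv j).ne'
  field_simp

theorem agg2_scl (E₁ E₂ F : Matrix (Fin 4) (Fin 4) ℝ) (v : Fin 4 → ℝ)
    (hv : ∀ i, 0 < v i) (hF : ∀ i j, 0 < F i j) (h : ∀ i j, E₁ i j * E₂ i j = F i j ^ 2) :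
    agg2 (scl E₁ v) (scl E₂ v) = scl F v := by
  ext i j
  have h0 : 0 ≤ scl F v i j := (div_pos (mul_pos (hF i j) (hv j)) (hv i)).le
  simp only [agg2, Matrix.of_apply]
  rw [← Real.sqrt_sq h0]
  congr 1
  simp only [scl]
  rw [div_pow, mul_pow, ← h i j]
  ring

/-- The Eigenvector Method violates aggregation invariance: there are two 4×4
pairwise comparison matrices in which alternative 2 is ranked strictly above
alternative 1 by the positive (Perron) eigenvectors, while the two alternatives
are tied in the aggregate. -/
theorem em_violates_aggregation_invariance :
    ∃ (A₁ A₂ : Matrix (Fin 4) (Fin 4) ℝ) (w₁ w₂ u : Fin 4 → ℝ)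
      (lam₁ lam₂ mu : ℝ),
      IsPCM A₁ ∧ IsPCM A₂ ∧
      (∀ i, 0 < w₁ i) ∧ (∀ i, 0 < w₂ i) ∧ (∀ i, 0 < u i) ∧
      A₁.mulVec w₁ = lam₁ • w₁ ∧ A₂.mulVec w₂ = lam₂ • w₂ ∧
      (agg2 A₁ A₂).mulVec u = mu • u ∧
      w₁ 0 < w₁ 1 ∧ w₂ 0 < w₂ 1 ∧ u 0 = u 1 := by
  
  obtain ⟨p, hp1, hp⟩ : ∃ p : ℝ, 1 < p ∧ p ^ 4 = 6 * p ^ 2 + 1 := by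
    have h10 : Real.sqrt 10 ^ 2 = 10 := Real.sq_sqrt (by norm_num)
    have h0 := Real.sqrt_nonneg 10
    have hP : Real.sqrt (3 + Real.sqrt 10) ^ 2 = 3 + Real.sqrt 10 := Real.sq_sqrt (by linarith)
    refine ⟨Real.sqrt (3 + Real.sqrt 10), ?_, ?_⟩
    · rw [Real.lt_sqrt (by norm_num)]
      linarith
    · rw [show Real.sqrt (3 + Real.sqrt 10) ^ 4 = (Real.sqrt (3 + Real.sqrt 10) ^ 2) ^ 2 by ring,
        hP]
      linarith
  have hp0 : 0 < p := by linarith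
  have hpp : 0 < p ^ 2 - 1 := by nlinarith
  let E₁ : Matrix (Fin 4) (Fin 4) ℝ :=
    !![1, p^2, 1, 1/p^2; 1/p^2, 1, p^2, 1; 1, 1/p^2, 1, p^2; p^2, 1, 1/p^2, 1]
  let E₂ : Matrix (Fin 4) (Fin 4) ℝ :=
    !![1, p^2, 1/p^2, 1; 1/p^2, 1, 1, p^2; p^2, 1, 1, 1/p^2; 1, 1/p^2, p^2, 1]
  let F : Matrix (Fin 4) (Fin 4) ℝ :=
    !![1, p^2, 1/p, 1/p; 1/p^2, 1, p, p; p, 1/p, 1, 1; p, 1/p, 1, 1]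
  let v : Fin 4 → ℝ := ![(p^2+1)/(2*p), (p^2-1)/(2*p), 1, 1]
  have hv : ∀ i, 0 < v i := by
    intro i
    fin_cases i <;> simp [v] <;> first | positivity | exact div_pos hpp (by positivity)
  have hE₁ : IsPCM E₁ := by
    constructor <;> intro i j <;> fin_cases i <;> fin_cases j <;> simp [E₁] <;> positivity
  have hE₂ : IsPCM E₂ := by
    constructor <;> intro i j <;> fin_cases i <;> fin_cases j <;> simp [E₂] <;> positivity
  have hF : ∀ i j, 0 < F i j := by
    intro i j
    fin_cases i <;> fin_cases j <;> simp [F] <;> positivity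
  have hEF : ∀ i j, E₁ i j * E₂ i j = F i j ^ 2 := by
    intro i j
    fin_cases i <;> fin_cases j <;> simp [E₁, E₂, F] <;> field_simp
  refine ⟨scl E₁ v, scl E₂ v, fun i => 1 / v i, fun i => 1 / v i, fun i => v i / v i,
    2 + p^2 + 1/p^2, 2 + p^2 + 1/p^2, 6, scl_isPCM _ _ hv hE₁, scl_isPCM _ _ hv hE₂,
    fun i => one_div_pos.2 (hv i), fun i => one_div_pos.2 (hv i),
    fun i => div_pos (hv i) (hv i), ?_, ?_, ?_, ?_, ?_, ?_⟩
  · apply scl_mulVec E₁ v (fun _ => 1) _ hv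
    intro i
    fin_cases i <;> simp [E₁, Fin.sum_univ_four] <;> ring
  · apply scl_mulVec E₂ v (fun _ => 1) _ hv
    intro i
    fin_cases i <;> simp [E₂, Fin.sum_univ_four] <;> ring
  · rw [agg2_scl E₁ E₂ F v hv hF hEF]
    apply scl_mulVec F v v _ hv
    intro i
    fin_cases i <;> simp [F, v, Fin.sum_univ_four] <;> field_simp <;> linarith [hp]
  · apply one_div_lt_one_div_of_lt (hv 1)
    simp only [v, Matrix.cons_val_zero, Matrix.cons_val_one]
    gcongr
    linarith
  · apply one_div_lt_one_div_of_lt (hv 1)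
    simp only [v, Matrix.cons_val_zero, Matrix.cons_val_one]
    gcongr
    linarith
  · simp only [div_self (hv 0).ne', div_self (hv 1).ne']
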